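/- Let d ∈ ℕ with d ≥ 1. Then for every k ≥ 19^(2d−1) + 1 and every step preserving continuous map F : S_{ℓ∞^k} → S_{ℓ1^k} such that F(1,…,1) ≠ F(−1,…,−1), one has ω_F(1/d) ≥ 1/2, i.e., there exist x, y ∈ S_{ℓ∞^k} with ‖x − y‖_∞ ≤ 1/d and ‖F(x) − F(y)‖_1 ≥ 1/2. -/

import Mathlib

/-- The sup norm (`ℓ∞` norm) on `ℝ^k`. -/
noncomputable def supNorm {k : ℕ} (x : Fin k → ℝ) : ℝ := ⨆ i, |x i|

/-- The `ℓ1` norm on `ℝ^k`. -/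
noncomputable def l1Norm {k : ℕ} (x : Fin k → ℝ) : ℝ := ∑ i, |x i|

/-!
A vector `x` with values in `[-1, 1]` that attains both `1` and `-1` is moved along the path
`t ↦ (x i - t)ᵢ`, truncated to `[-1, 1]`. This path stays on the unit sphere of `ℓ∞` and runs from
`(1, …, 1)` to `(-1, …, -1)`. The values of `F` at its end points are constant vectors of the same
`ℓ1` norm, hence opposite, so any prescribed coordinate of `F` vanishes at some time `t`.

Let `x` take the `2 d + 1` values `-1, -1 + 1 / d, …, 1`, on blocks of coordinates whose sizes grow
by a factor `r`, and choose the coordinate in the top block. At time `t` the even or the odd blocks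
below the top carry at least half of the mass of `F`. Moving levels of `x` by at most `1 / d`, one
can merge each of these blocks with the next one. `F` then has the same value on both, so the blocks
that carried half of the mass now carry at most `1 / (r + 1)` of it.
The `ℓ1` distance is therefore at least `2 (1 / 2 - 1 / (r + 1)) = (r - 1) / (r + 1)`.
-/

open Finset

section FiniteSums

variable {ι κ E : Type*}

theorem two_mul_sum_norm_sub_le_sum_norm_sub [Fintype ι] [SeminormedAddCommGroup E] {g h : ι → E}
    (hgh : ∑ i, ‖g i‖ = ∑ i, ‖h i‖) (s : Finset ι) :
    2 * (∑ i ∈ s, ‖g i‖ - ∑ i ∈ s, ‖h i‖) ≤ ∑ i, ‖g i - h i‖ := by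
  classical
  rw [← sum_add_sum_compl s] at hgh ⊢
  rw [← sum_add_sum_compl s (fun i => ‖h i‖)] at hgh
  have on_s : ∑ i ∈ s, ‖g i‖ - ∑ i ∈ s, ‖h i‖ ≤ ∑ i ∈ s, ‖g i - h i‖ := by
    rw [← sum_sub_distrib]
    exact sum_le_sum fun i _ => norm_sub_norm_le _ _
  have off_s : ∑ i ∈ sᶜ, ‖h i‖ - ∑ i ∈ sᶜ, ‖g i‖ ≤ ∑ i ∈ sᶜ, ‖g i - h i‖ := by
    rw [← sum_sub_distrib]
    exact sum_le_sum fun i _ => norm_sub_rev (g i) (h i) ▸ norm_sub_norm_le _ _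
  linarith

theorem sub_one_div_add_one_le_sum_norm_sub [Fintype ι] [SeminormedAddCommGroup E] {g h : ι → E}
    (hg : ∑ i, ‖g i‖ = 1) (hh : ∑ i, ‖h i‖ = 1) {s : Finset ι} (hgs : 1 / 2 ≤ ∑ i ∈ s, ‖g i‖)
    {r : ℝ} (hr : 0 < r + 1) (hhs : (r + 1) * ∑ i ∈ s, ‖h i‖ ≤ 1) :
    (r - 1) / (r + 1) ≤ ∑ i, ‖g i - h i‖ :=
  calc (r - 1) / (r + 1) = 2 * (1 / 2 - 1 / (r + 1)) := by field_simp; ring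
    _ ≤ 2 * (∑ i ∈ s, ‖g i‖ - ∑ i ∈ s, ‖h i‖) := by
      gcongr
      rwa [le_div_iff₀' hr]
    _ ≤ ∑ i, ‖g i - h i‖ := two_mul_sum_norm_sub_le_sum_norm_sub (hg.trans hh.symm) s

theorem mul_sum_le_sum_of_mul_card_le {s t : Finset ι} {r : ℕ} (hcard : r * #s ≤ #t) {f : ι → ℝ}
    (hf : ∀ i, 0 ≤ f i) (hle : ∀ i ∈ s, ∀ j ∈ t, f i ≤ f j) :
    r * ∑ i ∈ s, f i ≤ ∑ j ∈ t, f j := by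
  rcases s.eq_empty_or_nonempty with rfl | hs
  · simpa using sum_nonneg fun j _ => hf j
  obtain ⟨a, ha, hmax⟩ := s.exists_max_image f hs
  calc r * ∑ i ∈ s, f i ≤ r * (#s * f a) := by
        gcongr
        simpa only [nsmul_eq_mul] using sum_le_card_nsmul s f (f a) hmax
    _ = (r * #s : ℕ) * f a := by push_cast; ring
    _ ≤ #t * f a := by gcongr; exact hf a
    _ ≤ ∑ j ∈ t, f j := by
        simpa only [nsmul_eq_mul] using card_nsmul_le_sum t f (f a) (hle a ha)

theorem add_one_mul_sum_fibers_le [Fintype ι] [DecidableEq κ] {β : ι → κ} {J : Finset κ} {σ : κ → κ}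
    (hσ : Set.InjOn σ J) (hσJ : ∀ j ∈ J, σ j ∉ J) {r : ℕ}
    (hcard : ∀ j ∈ J, r * #{i | β i = j} ≤ #{i | β i = σ j}) {f : ι → ℝ} (hf : ∀ i, 0 ≤ f i)
    (hle : ∀ i i', β i ∈ J → β i' = σ (β i) → f i ≤ f i') :
    (r + 1) * ∑ i with β i ∈ J, f i ≤ ∑ i, f i := by
  have hdisj : Disjoint ({i | β i ∈ J} : Finset ι) ({i | β i ∈ J.image σ} : Finset ι) := by
    refine disjoint_filter.2 fun i _ hi hi' => ?_
    obtain ⟨j, hj, hji⟩ := mem_image.1 hi'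
    exact hσJ j hj (hji ▸ hi)
  have next : r * ∑ i with β i ∈ J, f i ≤ ∑ i with β i ∈ J.image σ, f i := by
    rw [← sum_fiberwise_eq_sum_filter, ← sum_fiberwise_eq_sum_filter, sum_image hσ, mul_sum]
    refine sum_le_sum fun j hj =>
      mul_sum_le_sum_of_mul_card_le (hcard j hj) hf fun i hi i' hi' => ?_
    rw [mem_filter_univ] at hi hi'
    exact hle i i' (hi ▸ hj) (hi ▸ hi')
  calc (r + 1) * ∑ i with β i ∈ J, f i
      ≤ ∑ i with β i ∈ J, f i + ∑ i with β i ∈ J.image σ, f i := by linarith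
    _ = ∑ i ∈ ({i | β i ∈ J} : Finset ι).disjUnion {i | β i ∈ J.image σ} hdisj, f i :=
        (sum_disjUnion hdisj).symm
    _ ≤ ∑ i, f i := sum_le_univ_sum_of_nonneg hf

theorem eq_neg_of_sum_norm_eq_of_const [Fintype ι] {u v : ι → ℝ} (hu : ∀ i j, u i = u j)
    (hv : ∀ i j, v i = v j) (hsum : ∑ i, ‖u i‖ = ∑ i, ‖v i‖) (hne : u ≠ v) : u = -v := by
  obtain ⟨a, ha⟩ := Function.ne_iff.1 hne
  have : Nonempty ι := ⟨a⟩
  have habs : |u a| = |v a| := by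
    simpa [hu _ a, hv _ a, Fintype.card_ne_zero] using hsum
  funext i
  rw [Pi.neg_apply, hu i a, hv i a]
  exact (abs_eq_abs.1 habs).resolve_left ha

end FiniteSums

section Blocks

variable {ι κ : Type*} [Fintype ι] [DecidableEq κ]

theorem exists_card_fibers_eq {s : Finset κ} {c : κ → ℕ} (hc : ∑ j ∈ s, c j = Fintype.card ι) :
    ∃ β : ι → κ, (∀ i, β i ∈ s) ∧ ∀ j ∈ s, #{i | β i = j} = c j := by
  have hcard : Fintype.card ι = Fintype.card (Σ j : s, Fin (c j)) := by
    simp only [Fintype.card_sigma, Fintype.card_fin, sum_coe_sort s c, hc]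
  let e : ι ≃ Σ j : s, Fin (c j) := Fintype.equivOfCardEq hcard
  refine ⟨fun i => (e i).1, fun i => (e i).1.2, fun j hj => ?_⟩
  have hfiber : ({i | ((e i).1 : κ) = j} : Finset ι) =
      univ.map ((Function.Embedding.sigmaMk ⟨j, hj⟩).trans e.symm.toEmbedding) := by
    ext i
    simp only [mem_filter_univ, mem_map, mem_univ, true_and, Function.Embedding.trans_apply,
      Function.Embedding.sigmaMk_apply, Equiv.coe_toEmbedding, Equiv.symm_apply_eq]
    constructor
    · rintro rfl
      exact ⟨(e i).2, rfl⟩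
    · rintro ⟨a, ha⟩
      rw [← ha]
  rw [hfiber, card_map, card_univ, Fintype.card_fin]

theorem exists_le_card_fibers {s : Finset κ} {m : κ} (hm : m ∈ s) {c : κ → ℕ}
    (hc : ∑ j ∈ s, c j ≤ Fintype.card ι) :
    ∃ β : ι → κ, (∀ i, β i ∈ s) ∧ (∀ j ∈ s, c j ≤ #{i | β i = j}) ∧
      ∀ j ∈ s, j ≠ m → #{i | β i = j} = c j := by
  let c' : κ → ℕ := c + Pi.single m (Fintype.card ι - ∑ j ∈ s, c j)
  have hc' : ∑ j ∈ s, c' j = Fintype.card ι := by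
    simp only [c', Pi.add_apply, sum_add_distrib, sum_pi_single', hm, if_true]
    omega
  obtain ⟨β, hβs, hβ⟩ := exists_card_fibers_eq hc'
  refine ⟨β, hβs, fun j hj => ?_, fun j hj hjm => ?_⟩
  · rw [hβ j hj]
    exact Nat.le_add_right _ _
  · simp only [hβ j hj, c', Pi.add_apply, Pi.single_eq_of_ne hjm, add_zero]

theorem exists_geometric_blocks {r m : ℕ} (hr : 1 ≤ r)
    (hcard : ∑ j ∈ range (m + 1), r ^ j ≤ Fintype.card ι) :
    ∃ β : ι → ℕ, (∀ i, β i ≤ m) ∧ (∀ j ≤ m, ∃ i, β i = j) ∧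
      ∀ j < m, r * #{i | β i = j} ≤ #{i | β i = j + 1} := by
  obtain ⟨β, hβ, hle, heq⟩ := exists_le_card_fibers (self_mem_range_succ m) hcard
  simp only [mem_range_succ_iff] at hβ hle heq
  refine ⟨β, hβ, fun j hj => ?_, fun j hj => ?_⟩
  · obtain ⟨i, hi⟩ := card_pos.1 ((Nat.pow_pos hr).trans_le (hle j hj))
    exact ⟨i, (mem_filter_univ i).1 hi⟩
  · rw [heq j hj.le hj.ne, ← pow_succ']
    exact hle (j + 1) hj

end Blocks

section ClampedShift

variable {ι : Type*}

/-- The path `t ↦ (x i - t)ᵢ` with all coordinates truncated to `[-1, 1]`. -/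
noncomputable def clampedShift (x : ι → ℝ) (t : ℝ) : ι → ℝ :=
  fun i => Set.projIcc (-1 : ℝ) 1 (by norm_num) (x i - t)

theorem clampedShift_apply_of_one_le {x : ι → ℝ} {t : ℝ} {i : ι} (h : 1 ≤ x i - t) :
    clampedShift x t i = 1 := by
  rw [clampedShift, Set.projIcc_of_right_le _ h]

theorem clampedShift_apply_of_le_neg_one {x : ι → ℝ} {t : ℝ} {i : ι} (h : x i - t ≤ -1) :
    clampedShift x t i = -1 := by
  rw [clampedShift, Set.projIcc_of_le_left _ h]

theorem clampedShift_apply_congr {x : ι → ℝ} {i j : ι} (h : x i = x j) (t : ℝ) :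
    clampedShift x t i = clampedShift x t j := by
  simp only [clampedShift, h]

theorem continuous_clampedShift (x : ι → ℝ) : Continuous (clampedShift x) :=
  continuous_pi fun _ =>
    continuous_subtype_val.comp (continuous_projIcc.comp (continuous_const.sub continuous_id))

variable [Fintype ι]

theorem norm_clampedShift_sub_le (x y : ι → ℝ) (t : ℝ) :
    ‖clampedShift x t - clampedShift y t‖ ≤ ‖x - y‖ := by
  refine (pi_norm_le_iff_of_nonneg (norm_nonneg _)).2 fun i => ?_
  calc ‖(clampedShift x t - clampedShift y t) i‖ ≤ |x i - t - (y i - t)| :=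
        Set.abs_projIcc_sub_projIcc _
    _ = ‖(x - y) i‖ := by rw [sub_sub_sub_cancel_right, Pi.sub_apply, Real.norm_eq_abs]
    _ ≤ ‖x - y‖ := norm_le_pi_norm _ i

theorem norm_clampedShift_eq_one {x : ι → ℝ} (hbot : ∃ i, x i = -1) (htop : ∃ i, x i = 1) (t : ℝ) :
    ‖clampedShift x t‖ = 1 := by
  have hle : ‖clampedShift x t‖ ≤ 1 :=
    (pi_norm_le_iff_of_nonneg zero_le_one).2 fun _ => abs_le.2 <|
      Subtype.coe_prop (Set.projIcc _ _ _ _)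
  have hge : ∃ i, ‖clampedShift x t i‖ = 1 := by
    obtain ⟨a, ha⟩ := hbot
    obtain ⟨b, hb⟩ := htop
    rcases le_total t 0 with ht | ht
    · exact ⟨b, by rw [clampedShift_apply_of_one_le (by linarith), norm_one]⟩
    · exact ⟨a, by rw [clampedShift_apply_of_le_neg_one (by linarith), norm_neg, norm_one]⟩
  obtain ⟨i, hi⟩ := hge
  exact hle.antisymm (hi ▸ norm_le_pi_norm _ i)

theorem clampedShift_neg_two {x : ι → ℝ} (hx : ‖x‖ ≤ 1) : clampedShift x (-2) = 1 :=
  funext fun i => clampedShift_apply_of_one_le <| by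
    linarith [neg_le_of_abs_le ((norm_le_pi_norm x i).trans hx)]

theorem clampedShift_two {x : ι → ℝ} (hx : ‖x‖ ≤ 1) : clampedShift x 2 = -1 :=
  funext fun i => clampedShift_apply_of_le_neg_one <| by
    linarith [le_of_abs_le ((norm_le_pi_norm x i).trans hx)]

theorem exists_apply_clampedShift_eq_zero {F : (ι → ℝ) → ι → ℝ}
    (hmaps : ∀ x, ‖x‖ = 1 → ∑ i, ‖F x i‖ = 1) (hcont : ContinuousOn F (Metric.sphere 0 1))
    (hstep : ∀ x, ‖x‖ = 1 → (F x).FactorsThrough x) (hne : F 1 ≠ F (-1))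
    {x : ι → ℝ} (hx : ‖x‖ ≤ 1) (hbot : ∃ i, x i = -1) (htop : ∃ i, x i = 1) (b : ι) :
    ∃ t, F (clampedShift x t) b = 0 := by
  have hnorm : ∀ t, ‖clampedShift x t‖ = 1 := norm_clampedShift_eq_one hbot htop
  have hone : ‖(1 : ι → ℝ)‖ = 1 := clampedShift_neg_two hx ▸ hnorm (-2)
  have hneg : ‖(-1 : ι → ℝ)‖ = 1 := by rw [norm_neg, hone]
  have opposite : F 1 = -F (-1) :=
    eq_neg_of_sum_norm_eq_of_const (fun _ _ => hstep 1 hone rfl) (fun _ _ => hstep (-1) hneg rfl)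
      ((hmaps 1 hone).trans (hmaps (-1) hneg).symm) hne
  have path_continuous : Continuous fun t => F (clampedShift x t) b :=
    (continuous_apply b).comp <| hcont.comp_continuous (continuous_clampedShift x) fun t =>
      mem_sphere_zero_iff_norm.2 (hnorm t)
  have hstart : F (clampedShift x (-2)) b = -F (-1) b := by
    rw [clampedShift_neg_two hx, opposite, Pi.neg_apply]
  have hend : F (clampedShift x 2) b = F (-1) b := by rw [clampedShift_two hx]
  rcases le_total 0 (F (-1) b) with h | h
  · exact mem_range_of_exists_le_of_exists_ge path_continuous ⟨-2, by linarith⟩ ⟨2, by linarith⟩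
  · exact mem_range_of_exists_le_of_exists_ge path_continuous ⟨2, by linarith⟩ ⟨-2, by linarith⟩

end ClampedShift

section Levels

variable {ι : Type*}

/-- The vector whose coordinates on level `j` have the value `-1 + j / d`. The levels `0, …, 2 d`
are the points of `[-1, 1]` at spacing `1 / d`. -/
noncomputable def levelVector (d : ℕ) (β : ι → ℕ) : ι → ℝ := fun i => -1 + β i / d

theorem levelVector_apply_eq_neg_one {d : ℕ} {β : ι → ℕ} {i : ι} (h : β i = 0) :
    levelVector d β i = -1 := by
  simp [levelVector, h]

theorem levelVector_apply_eq_one {d : ℕ} (hd : 1 ≤ d) {β : ι → ℕ} {i : ι} (h : β i = 2 * d) :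
    levelVector d β i = 1 := by
  have : (d : ℝ) ≠ 0 := by positivity
  simp only [levelVector, h]
  push_cast
  field_simp
  norm_num

theorem norm_clampedShift_levelVector [Fintype ι] {d : ℕ} (hd : 1 ≤ d) {β : ι → ℕ}
    (hbot : ∃ i, β i = 0) (htop : ∃ i, β i = 2 * d) (t : ℝ) :
    ‖clampedShift (levelVector d β) t‖ = 1 :=
  norm_clampedShift_eq_one (hbot.imp fun _ => levelVector_apply_eq_neg_one)
    (htop.imp fun _ => levelVector_apply_eq_one hd) t

theorem clampedShift_levelVector_apply_congr {β : ι → ℕ} {i j : ι} (h : β i = β j) (d : ℕ) (t : ℝ) :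
    clampedShift (levelVector d β) t i = clampedShift (levelVector d β) t j :=
  clampedShift_apply_congr (by simp only [levelVector, h]) t

theorem norm_levelVector_le_one [Fintype ι] {d : ℕ} {β : ι → ℕ} (hβ : ∀ i, β i ≤ 2 * d) :
    ‖levelVector d β‖ ≤ 1 := by
  refine (pi_norm_le_iff_of_nonneg zero_le_one).2 fun i => abs_le.2 ?_
  have hnonneg : (0 : ℝ) ≤ β i / d := by positivity
  have hle : (β i : ℝ) / d ≤ 2 :=
    div_le_of_le_mul₀ d.cast_nonneg zero_le_two (mod_cast hβ i)
  constructor <;> simp only [levelVector] <;> linarith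

theorem norm_levelVector_sub_le [Fintype ι] (d : ℕ) {β γ : ι → ℕ}
    (h : ∀ i, β i ≤ γ i + 1 ∧ γ i ≤ β i + 1) :
    ‖levelVector d β - levelVector d γ‖ ≤ 1 / d := by
  refine (pi_norm_le_iff_of_nonneg (by positivity)).2 fun i => ?_
  have hβγ : (β i : ℝ) ≤ γ i + 1 := mod_cast (h i).1
  have hγβ : (γ i : ℝ) ≤ β i + 1 := mod_cast (h i).2
  calc ‖(levelVector d β - levelVector d γ) i‖ = |(β i : ℝ) - γ i| / d := by
        rw [Pi.sub_apply, levelVector, levelVector, add_sub_add_left_eq_sub, ← sub_div, norm_div,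
          Real.norm_eq_abs, Real.norm_natCast]
    _ ≤ 1 / d := by
        gcongr
        exact abs_le.2 ⟨by linarith, by linarith⟩

/-- The levels `j < n` of parity `ε`. -/
def levelsOfParity (n ε : ℕ) : Finset ℕ := {j ∈ range n | j % 2 = ε}

/-- Rounds levels to even ones, so that each level of parity `ε` is identified with the next one. -/
def mergeLevels (ε j : ℕ) : ℕ := 2 * ((j + ε) / 2)

theorem mergeLevels_zero {ε : ℕ} (hε : ε < 2) : mergeLevels ε 0 = 0 := by
  unfold mergeLevels
  omega

theorem mergeLevels_two_mul {ε : ℕ} (hε : ε < 2) (d : ℕ) : mergeLevels ε (2 * d) = 2 * d := by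
  unfold mergeLevels
  omega

theorem le_mergeLevels_add_one (ε j : ℕ) : j ≤ mergeLevels ε j + 1 := by
  unfold mergeLevels
  omega

theorem mergeLevels_le_add_one {ε : ℕ} (hε : ε < 2) (j : ℕ) : mergeLevels ε j ≤ j + 1 := by
  unfold mergeLevels
  omega

theorem mergeLevels_succ {n ε j : ℕ} (hj : j ∈ levelsOfParity n ε) :
    mergeLevels ε (j + 1) = mergeLevels ε j := by
  have hparity : j % 2 = ε := (mem_filter.1 hj).2
  unfold mergeLevels
  omega

theorem exists_parity_half_le_sum [Fintype ι] {β : ι → ℕ} {n : ℕ} {f : ι → ℝ} (hsum : ∑ i, f i = 1)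
    (hf : ∀ i, n ≤ β i → f i = 0) :
    ∃ ε < 2, 1 / 2 ≤ ∑ i with β i ∈ levelsOfParity n ε, f i := by
  have hsum' : ∑ i with β i < n, f i = 1 := by
    rw [← hsum]
    exact sum_filter_of_ne fun i _ hi => lt_of_not_ge fun h => hi (hf i h)
  obtain ⟨ε, hε, hhalf⟩ := exists_le_sum_fiber_of_maps_to_of_nsmul_le_sum
    (s := {i | β i < n}) (t := range 2) (f := fun i => β i % 2) (w := f) (b := 1 / 2)
    (fun i _ => mem_range.2 (Nat.mod_lt _ two_pos)) ⟨0, by simp⟩ (by rw [hsum']; norm_num)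
  refine ⟨ε, mem_range.1 hε, ?_⟩
  simpa only [levelsOfParity, mem_filter, mem_range, filter_filter] using hhalf

end Levels

theorem add_one_mul_sum_parity_le_of_factorsThrough {ι : Type*} [Fintype ι] {β : ι → ℕ} {n r : ℕ}
    (hblocks : ∀ j < n, r * #{i | β i = j} ≤ #{i | β i = j + 1}) {ε : ℕ} {g : ι → ℝ}
    (hg : g.FactorsThrough (mergeLevels ε ∘ β)) :
    (r + 1) * ∑ i with β i ∈ levelsOfParity n ε, ‖g i‖ ≤ ∑ i, ‖g i‖ := by
  refine add_one_mul_sum_fibers_le (add_left_injective 1).injOn (fun j hj hj' => ?_)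
    (fun j hj => hblocks j (mem_range.1 (mem_filter.1 hj).1)) (fun i => norm_nonneg _)
    fun i i' hi hi' => ?_
  · have hmod : j % 2 = (j + 1) % 2 := (mem_filter.1 hj).2.trans (mem_filter.1 hj').2.symm
    omega
  · rw [hg (show mergeLevels ε (β i) = mergeLevels ε (β i') by rw [hi', mergeLevels_succ hi])]

theorem stmt_1_general {ι : Type*} [Fintype ι] {d r : ℕ} (hd : 1 ≤ d) (hr : 1 ≤ r)
    (hcard : ∑ j ∈ range (2 * d + 1), r ^ j ≤ Fintype.card ι) {F : (ι → ℝ) → ι → ℝ}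
    (hmaps : ∀ x, ‖x‖ = 1 → ∑ i, ‖F x i‖ = 1) (hcont : ContinuousOn F (Metric.sphere 0 1))
    (hstep : ∀ x, ‖x‖ = 1 → (F x).FactorsThrough x) (hne : F 1 ≠ F (-1)) :
    ∃ x y : ι → ℝ, ‖x‖ = 1 ∧ ‖y‖ = 1 ∧ ‖x - y‖ ≤ 1 / d ∧
      ((r : ℝ) - 1) / (r + 1) ≤ ∑ i, ‖F x i - F y i‖ := by
  obtain ⟨β, hβ, hsurj, hblocks⟩ := exists_geometric_blocks hr hcard
  obtain ⟨a, ha⟩ := hsurj 0 (Nat.zero_le _)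
  obtain ⟨b, hb⟩ := hsurj (2 * d) le_rfl
  obtain ⟨t, ht⟩ := exists_apply_clampedShift_eq_zero hmaps hcont hstep hne
    (norm_levelVector_le_one hβ) ⟨a, levelVector_apply_eq_neg_one ha⟩
    ⟨b, levelVector_apply_eq_one hd hb⟩ b
  let x := clampedShift (levelVector d β) t
  have hx : ‖x‖ = 1 := norm_clampedShift_levelVector hd ⟨a, ha⟩ ⟨b, hb⟩ t
  have top_block : ∀ i, 2 * d ≤ β i → ‖F x i‖ = 0 := fun i hi => by
    have hib : β i = β b := hb ▸ (hβ i).antisymm hi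
    rw [hstep x hx (clampedShift_levelVector_apply_congr hib d t), ht, norm_zero]
  obtain ⟨ε, hε, heavy⟩ := exists_parity_half_le_sum (hmaps x hx) top_block
  let γ : ι → ℕ := mergeLevels ε ∘ β
  let y := clampedShift (levelVector d γ) t
  have hy : ‖y‖ = 1 := norm_clampedShift_levelVector hd
    ⟨a, (congrArg _ ha).trans (mergeLevels_zero hε)⟩
    ⟨b, (congrArg _ hb).trans (mergeLevels_two_mul hε d)⟩ t
  have hxy : ‖x - y‖ ≤ 1 / d := (norm_clampedShift_sub_le _ _ t).trans <|
    norm_levelVector_sub_le d fun i =>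
      ⟨le_mergeLevels_add_one ε (β i), mergeLevels_le_add_one hε (β i)⟩
  have light : (r + 1) * ∑ i with β i ∈ levelsOfParity (2 * d) ε, ‖F y i‖ ≤ 1 :=
    hmaps y hy ▸ add_one_mul_sum_parity_le_of_factorsThrough hblocks fun i j hij =>
      hstep y hy (clampedShift_levelVector_apply_congr hij d t)
  exact ⟨x, y, hx, hy, hxy,
    sub_one_div_add_one_le_sum_norm_sub (hmaps x hx) (hmaps y hy) heavy (by positivity) light⟩

theorem supNorm_eq_norm {k : ℕ} (x : Fin k → ℝ) : supNorm x = ‖x‖ :=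
  le_antisymm (Real.iSup_le (norm_le_pi_norm x) (norm_nonneg x))
    ((pi_norm_le_iff_of_nonneg (Real.iSup_nonneg fun i => abs_nonneg (x i))).2 fun i =>
      le_ciSup (f := fun i => |x i|) (Set.finite_range _).bddAbove i)

theorem sum_range_three_pow_le {d : ℕ} (hd : 1 ≤ d) :
    ∑ j ∈ range (2 * d + 1), 3 ^ j ≤ 19 ^ (2 * d - 1) + 1 := by
  have bound : ∀ n : ℕ, ∑ j ∈ range (n + 3), 3 ^ j ≤ 19 ^ (n + 1) + 1 := fun n => by
    induction n with
    | zero => decide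
    | succ n ih =>
      rw [geom_sum_succ, pow_succ]
      have : 0 < 19 ^ (n + 1) := by positivity
      omega
  obtain ⟨e, rfl⟩ := Nat.exists_eq_add_of_le' hd
  exact bound (2 * e)

/-- For `d ≥ 1`, `k ≥ 19^(2d-1) + 1`, and any step preserving continuous map
`F` from the unit sphere of `ℓ∞^k` to the unit sphere of `ℓ1^k` with
`F(1,…,1) ≠ F(-1,…,-1)`, there are `x, y` on the sphere with `‖x - y‖_∞ ≤ 1/d` and
`‖F x - F y‖_1 ≥ 1/2`. -/
theorem stmt_1 (d : ℕ) (hd : 1 ≤ d) (k : ℕ) (hk : 19 ^ (2 * d - 1) + 1 ≤ k)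
    (F : (Fin k → ℝ) → (Fin k → ℝ))
    (hFmaps : ∀ x, supNorm x = 1 → l1Norm (F x) = 1)
    (hFcont : ContinuousOn F {x | supNorm x = 1})
    (hstep : ∀ x, supNorm x = 1 → ∀ i j, x i = x j → F x i = F x j)
    (hne : F (fun _ => (1 : ℝ)) ≠ F (fun _ => (-1 : ℝ))) :
    ∃ x y : Fin k → ℝ, supNorm x = 1 ∧ supNorm y = 1 ∧
      supNorm (x - y) ≤ 1 / (d : ℝ) ∧ 1 / 2 ≤ l1Norm (F x - F y) := by
  simp only [supNorm_eq_norm] at hFmaps hFcont hstep ⊢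
  have hcard : ∑ j ∈ range (2 * d + 1), 3 ^ j ≤ Fintype.card (Fin k) := by
    rw [Fintype.card_fin]
    exact (sum_range_three_pow_le hd).trans hk
  have hcont : ContinuousOn F (Metric.sphere 0 1) :=
    hFcont.mono fun x hx => mem_sphere_zero_iff_norm.1 hx
  obtain ⟨x, y, hx, hy, hxy, hF⟩ :=
    stmt_1_general hd (by norm_num) hcard hFmaps hcont (fun x hx i j => hstep x hx i j) hne
  exact ⟨x, y, hx, hy, hxy, le_of_eq_of_le (by norm_num) hF⟩
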